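/- For all real numbers a_1, …, a_n, every function f : ℝ → ℝ, and every x = (x_1,…,x_n) ∈ ℝ^n, one has a_1 f(x_1^*) + … + a_n f(x_n^*) = Σ_{k=1}^n ( Σ_{j=1}^k (−1)^{j−1} C(k−1, j−1) a_{n−k+j} ) · Σ_{1 ≤ i_1 < … < i_k ≤ n} f(max(|x_{i_1}|, …, |x_{i_k}|)), where C(·,·) denotes the binomial coefficient and the inner sum on the right runs over all k-element subsets {i_1 < … < i_k} of {1, …, n}. -/

import Mathlib

/-!
Write `y = x^*`, a non-increasing nonnegative sequence indexed from `0`. Classifying the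
`(k+1)`-subsets of `Fin n` by their least element `m`, at which `y` attains its maximum over the
subset, gives `∑_{|s| = k+1} f (max_{s} |x|) = ∑_m C(n-1-m, k) f (y_m)`
(`sum_powersetCard_maxAbsOn`; `maxAbsOn_map_sort` moves subsets along the sorting permutation).
It remains to see that `f (y_m)` has the coefficient `a (m+1)` on the right-hand side. With
`b l = a (n - l)`, the inner sum over `j` is the `k`-th forward difference `Δ^k b 0`, so this is
Newton's formula `b N = ∑_k C(N, k) Δ^k b 0` at `N = n - 1 - m` (`sum_choose_mul_alternating`).
-/

/-- The non-increasing rearrangement of `(|x 0|, …, |x (n-1)|)`. -/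
noncomputable def dstar {n : ℕ} (x : Fin n → ℝ) : Fin n → ℝ :=
  fun i => |x (Tuple.sort (fun j => -|x j|) i)|

/-- `max_{i ∈ s} |x i|` (with the convention `0` for `s = ∅`). -/
noncomputable def maxAbsOn {n : ℕ} (x : Fin n → ℝ) (s : Finset (Fin n)) : ℝ :=
  s.fold max 0 (fun i => |x i|)

/-- Summation over subsets of size `k + 1`, classified by their least element. -/
lemma sum_powersetCard_succ_eq_sum_min {n : ℕ} (k : ℕ) (F : Finset (Fin n) → ℝ) :
    ∑ t ∈ Finset.powersetCard (k + 1) (Finset.univ : Finset (Fin n)), F t =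
      ∑ m : Fin n, ∑ u ∈ Finset.powersetCard k (Finset.Ioi m), F (insert m u) := by
  rw [Finset.sum_sigma']
  symm
  have notMem : ∀ p ∈ (Finset.univ : Finset (Fin n)).sigma
      (fun m => Finset.powersetCard k (Finset.Ioi m)), p.1 ∉ p.2 := by
    rintro ⟨m, u⟩ hp hm
    simp only [Finset.mem_sigma, Finset.mem_univ, true_and, Finset.mem_powersetCard] at hp
    simpa using hp.1 hm
  refine Finset.sum_bij (fun p _ => insert p.1 p.2) ?_ ?_ ?_ ?_
  · rintro ⟨m, u⟩ hp
    have h := notMem _ hp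
    simp only [Finset.mem_sigma, Finset.mem_univ, true_and, Finset.mem_powersetCard] at hp
    simp [Finset.mem_powersetCard, Finset.card_insert_of_notMem h, hp.2]
  · rintro ⟨m, u⟩ hp ⟨m', u'⟩ hp' heq
    have h := notMem _ hp
    have h' := notMem _ hp'
    simp only [Finset.mem_sigma, Finset.mem_univ, true_and, Finset.mem_powersetCard] at hp hp'
    dsimp only at heq h h'
    have hmm : m = m' := by
      have h1 : m ∈ insert m' u' := heq ▸ Finset.mem_insert_self m u
      have h2 : m' ∈ insert m u := heq ▸ Finset.mem_insert_self m' u'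
      rcases Finset.mem_insert.1 h1 with h1 | h1
      · exact h1
      rcases Finset.mem_insert.1 h2 with h2 | h2
      · exact h2.symm
      exact absurd (Finset.mem_Ioi.1 (hp.1 h2)) (Finset.mem_Ioi.1 (hp'.1 h1)).asymm
    subst hmm
    have : u = u' := by
      rw [← Finset.erase_insert h, heq, Finset.erase_insert h']
    rw [this]
  · intro t ht
    rw [Finset.mem_powersetCard] at ht
    have hne : t.Nonempty := Finset.card_pos.1 (by omega)
    refine ⟨⟨t.min' hne, t.erase (t.min' hne)⟩, ?_, Finset.insert_erase (t.min'_mem hne)⟩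
    simp only [Finset.mem_sigma, Finset.mem_univ, true_and, Finset.mem_powersetCard]
    refine ⟨fun i hi => Finset.mem_Ioi.2 (t.min'_lt_of_mem_erase_min' hne hi), ?_⟩
    rw [Finset.card_erase_of_mem (t.min'_mem hne)]
    omega
  · intros
    rfl

lemma dstar_antitone {n : ℕ} (x : Fin n → ℝ) : Antitone (dstar x) := by
  intro i j hij
  have h := Tuple.monotone_sort (fun j => -|x j|) hij
  simpa [dstar] using h

lemma maxAbsOn_map_sort {n : ℕ} (x : Fin n → ℝ) (t : Finset (Fin n)) :
    maxAbsOn x (t.map (Tuple.sort (fun j => -|x j|)).toEmbedding) = t.fold max 0 (dstar x) := by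
  rw [maxAbsOn, Finset.fold_map]
  rfl

/-- Over a set with least element `m`, a non-increasing nonnegative function is maximal at `m`. -/
lemma fold_max_insert_of_antitone {n : ℕ} {y : Fin n → ℝ} (hy : Antitone y) (hy0 : ∀ i, 0 ≤ y i)
    {m : Fin n} {u : Finset (Fin n)} (hu : u ⊆ Finset.Ioi m) :
    (insert m u).fold max 0 y = y m := by
  apply le_antisymm
  · rw [Finset.fold_max_le]
    refine ⟨hy0 m, fun i hi => hy ?_⟩
    rcases Finset.mem_insert.1 hi with rfl | hi
    · exact le_rfl
    · exact (Finset.mem_Ioi.1 (hu hi)).le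
  · rw [Finset.le_fold_max]
    exact Or.inr ⟨m, Finset.mem_insert_self m u, le_rfl⟩

lemma sum_powersetCard_maxAbsOn {n : ℕ} (k : ℕ) (f : ℝ → ℝ) (x : Fin n → ℝ) :
    ∑ s ∈ Finset.powersetCard (k + 1) (Finset.univ : Finset (Fin n)), f (maxAbsOn x s) =
      ∑ m : Fin n, ((n - 1 - m.1).choose k : ℝ) * f (dstar x m) := by
  have hmap : Finset.powersetCard (k + 1) (Finset.univ : Finset (Fin n)) =
      (Finset.powersetCard (k + 1) (Finset.univ : Finset (Fin n))).map
        (Finset.mapEmbedding (Tuple.sort (fun j => -|x j|)).toEmbedding).toEmbedding := by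
    rw [← Finset.powersetCard_map, Finset.map_univ_equiv]
  rw [hmap, Finset.sum_map]
  simp only [RelEmbedding.coe_toEmbedding, Finset.mapEmbedding_apply, maxAbsOn_map_sort]
  rw [sum_powersetCard_succ_eq_sum_min k (fun t => f (t.fold max 0 (dstar x)))]
  refine Finset.sum_congr rfl fun m _ => ?_
  rw [Finset.sum_congr rfl (g := fun _ => f (dstar x m)) fun u hu => by
    rw [fold_max_insert_of_antitone (dstar_antitone x) (fun i => abs_nonneg _)
      (Finset.mem_powersetCard.1 hu).1]]
  simp

/-- Newton's forward difference formula for `l ↦ a (n - l)`, with the differences expanded and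
the outer sum extended by zero terms up to `n`. -/
lemma sum_choose_mul_alternating {n N : ℕ} (hN : N < n) (a : ℕ → ℝ) :
    ∑ k ∈ Finset.range n, (∑ j ∈ Finset.range (k + 1),
      (-1 : ℝ) ^ j * (k.choose j) * a (n - (k + 1) + (j + 1))) * (N.choose k) = a (n - N) := by
  have newton := shift_eq_sum_fwdDiff_iter (1 : ℕ) (fun l => a (n - l)) N 0
  simp only [fwdDiff_iter_eq_sum_shift, smul_eq_mul, mul_one, zero_add, nsmul_eq_mul,
    zsmul_eq_mul] at newton
  rw [newton, ← Finset.sum_subset (Finset.range_subset_range.2 (Nat.succ_le_of_lt hN))]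
  · refine Finset.sum_congr rfl fun k hk => ?_
    rw [mul_comm, ← Finset.sum_range_reflect]
    congr 1
    refine Finset.sum_congr rfl fun j hj => ?_
    rw [Finset.mem_range] at hk hj
    have e1 : k + 1 - 1 - j = k - j := by omega
    have e2 : n - (k + 1) + (k - j + 1) = n - j := by omega
    rw [e1, e2, Nat.choose_symm (by omega)]
    push_cast
    rfl
  · intro k _ hk
    rw [Finset.mem_range] at hk
    rw [Nat.choose_eq_zero_of_lt (by omega)]
    simp

/-- Lemma 1: `∑ aₖ f(xₖ^*)` expanded in terms of maxima over subsets. -/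
theorem stmt8 (n : ℕ) (a : ℕ → ℝ) (f : ℝ → ℝ) (x : Fin n → ℝ) :
    ∑ i : Fin n, a (i.1 + 1) * f (dstar x i) =
      ∑ k ∈ Finset.Icc 1 n,
        (∑ j ∈ Finset.Icc 1 k,
            (-1 : ℝ) ^ (j - 1) * ((k - 1).choose (j - 1)) * a (n - k + j)) *
          ∑ s ∈ Finset.powersetCard k (Finset.univ : Finset (Fin n)),
            f (maxAbsOn x s) := by
  have shift : ∀ (m : ℕ) (g : ℕ → ℝ),
      ∑ k ∈ Finset.Icc 1 m, g k = ∑ k ∈ Finset.range m, g (k + 1) := by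
    intro m g
    rw [Finset.range_eq_Ico, Finset.sum_Ico_add' g 0 m 1]
    rfl
  simp only [shift, sum_powersetCard_maxAbsOn, Nat.add_sub_cancel,
    Finset.mul_sum (s := Finset.univ)]
  rw [Finset.sum_comm]
  refine Finset.sum_congr rfl fun m _ => ?_
  have hm := m.2
  have key := sum_choose_mul_alternating (show n - 1 - m.1 < n by omega) a
  rw [show n - (n - 1 - m.1) = m.1 + 1 by omega] at key
  rw [← key, Finset.sum_mul]
  exact Finset.sum_congr rfl fun k _ => mul_assoc _ _ _
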